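/- Average over the outer mean anomaly. Let δ_1 ∈ (0,1), δ_2 ∈ (0,1), δ_3 ∈ ℝ, and set β_0 = (1/2)(9δ_1² − 9δ_3² + 15δ_3²/δ_1² − 15) and β_1 = (1/2)(5 − 3δ_1²). Then: (a) for all γ_3, v ∈ ℝ, A_0(γ_3, v)/2 + C_0(γ_3, v) = β_0·sin²(v − γ_3) + β_1, where A_0, C_0 are as defined; and (b) for all γ_3 ∈ ℝ, (δ_2³/2π)·∫_0^{2π} (1 + √(1 − δ_2²) cos v)·(β_0 sin²(v − γ_3) + β_1) dv = δ_2³·(β_0/2 + β_1). -/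

import Mathlib

noncomputable section

open Real

/-- The trigonometric polynomial `A₀`. -/
def A0 (δ1 δ3 γ3 v3 : ℝ) : ℝ :=
  15 * ((δ3 ^ 2 - δ3 ^ 2 / δ1 ^ 2 - (1 - δ1 ^ 2)) * Real.sin (v3 - γ3) ^ 2 + (1 - δ1 ^ 2))

/-- The trigonometric polynomial `B₀`. -/
def B0 (δ1 δ3 γ3 v3 : ℝ) : ℝ :=
  30 * (δ3 / δ1) * (1 - δ1 ^ 2) * Real.cos (v3 - γ3) * Real.sin (v3 - γ3)

/-- The trigonometric polynomial `C₀`. -/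
def C0 (δ1 δ3 γ3 v3 : ℝ) : ℝ :=
  (15 * δ3 ^ 2 / δ1 ^ 2 - 12 * δ3 ^ 2 - 3 * δ1 ^ 2) * Real.sin (v3 - γ3) ^ 2 + 6 * δ1 ^ 2 - 5

/-- The quadrupolar Hamiltonian `H₀²³` of the interaction between bodies 2 and 3. -/
def H023 (δ1 δ2 δ3 γ3 ψ1 v3 : ℝ) : ℝ :=
  (1 + Real.sqrt (1 - δ2 ^ 2) * Real.cos v3) ^ 3 *
    (A0 δ1 δ3 γ3 v3 * Real.cos ψ1 ^ 2 + B0 δ1 δ3 γ3 v3 * Real.cos ψ1 * Real.sin ψ1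
      + C0 δ1 δ3 γ3 v3)

/-!
The factor `cos v` changes sign under `v ↦ v + π`, while `sin² (v - γ)` is unchanged, so the part of
the integrand carrying the eccentricity integrates to zero over a full period. What is left is the
mean of `β₀ sin² + β₁`, which does not see the phase `γ`.
-/

theorem intervalIntegral_eq_zero_of_antiperiodic {E : Type*} [NormedAddCommGroup E]
    [NormedSpace ℝ E] {f : ℝ → E} {c : ℝ} (hf : Function.Antiperiodic f c) (t : ℝ) :
    ∫ x in t..t + 2 * c, f x = 0 := by
  have h_shift : ∫ x in t..t + 2 * c, f x = -∫ x in t..t + 2 * c, f x :=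
    calc ∫ x in t..t + 2 * c, f x = ∫ x in t + c..t + c + 2 * c, f x :=
          hf.periodic_two_mul.intervalIntegral_add_eq t (t + c)
      _ = ∫ x in t..t + 2 * c, f (x + c) := by
          rw [intervalIntegral.integral_comp_add_right, add_right_comm]
      _ = -∫ x in t..t + 2 * c, f x := by
          simp only [hf _, intervalIntegral.integral_neg]
  have : IsAddTorsionFree E := .of_isTorsionFree ℝ E
  exact self_eq_neg.mp h_shift

theorem integral_one_add_mul_cos_mul_of_periodic_pi {g : ℝ → ℝ} (hg : Function.Periodic g π)
    (e t : ℝ) (hg_int : IntervalIntegrable g MeasureTheory.volume t (t + 2 * π)) :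
    ∫ v in t..t + 2 * π, (1 + e * cos v) * g v = ∫ v in t..t + 2 * π, g v := by
  have h_antiperiodic : Function.Antiperiodic (fun v => cos v * g v) π := fun v => by
    simp only [cos_add_pi, hg v, neg_mul]
  have h_int : IntervalIntegrable (fun v => cos v * g v) MeasureTheory.volume t (t + 2 * π) :=
    hg_int.continuousOn_mul continuous_cos.continuousOn
  calc ∫ v in t..t + 2 * π, (1 + e * cos v) * g v
      = ∫ v in t..t + 2 * π, (g v + e * (cos v * g v)) := by
        simp only [one_add_mul, mul_assoc]
    _ = ∫ v in t..t + 2 * π, g v := by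
        rw [intervalIntegral.integral_add hg_int (h_int.const_mul e),
          intervalIntegral.integral_const_mul,
          intervalIntegral_eq_zero_of_antiperiodic h_antiperiodic, mul_zero, add_zero]

theorem integral_sin_sq_period (t : ℝ) : ∫ x in t..t + 2 * π, sin x ^ 2 = π := by
  rw [integral_sin_sq, sin_add_two_pi, cos_add_two_pi]
  ring

theorem integral_mul_sin_sub_sq_add_const_period (a b γ t : ℝ) :
    ∫ v in t..t + 2 * π, (a * sin (v - γ) ^ 2 + b) = 2 * π * (a / 2 + b) := by
  have h_sin_sq : ∫ v in t..t + 2 * π, sin (v - γ) ^ 2 = π := by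
    rw [intervalIntegral.integral_comp_sub_right (fun x => sin x ^ 2), add_sub_right_comm,
      integral_sin_sq_period]
  rw [intervalIntegral.integral_add (Continuous.intervalIntegrable (by fun_prop) _ _)
      intervalIntegrable_const, intervalIntegral.integral_const_mul, h_sin_sq,
    intervalIntegral.integral_const, smul_eq_mul]
  ring

theorem integral_one_add_mul_cos_mul_sin_sub_sq_add_const (e a b γ t : ℝ) :
    ∫ v in t..t + 2 * π, (1 + e * cos v) * (a * sin (v - γ) ^ 2 + b)
      = 2 * π * (a / 2 + b) := by
  have h_periodic : Function.Periodic (fun v => a * sin (v - γ) ^ 2 + b) π := fun v => by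
    simp only [add_sub_right_comm v π γ, sin_add_pi, neg_sq]
  rw [integral_one_add_mul_cos_mul_of_periodic_pi h_periodic e t
      (Continuous.intervalIntegrable (by fun_prop) _ _),
    integral_mul_sin_sub_sq_add_const_period]

theorem H023_average_outer_anomaly_general (δ1 δ2 δ3 e : ℝ) (h1 : δ1 ≠ 0) :
    let β0 : ℝ := (1 / 2) * (9 * δ1 ^ 2 - 9 * δ3 ^ 2 + 15 * δ3 ^ 2 / δ1 ^ 2 - 15)
    let β1 : ℝ := (1 / 2) * (5 - 3 * δ1 ^ 2)
    (∀ γ3 v : ℝ,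
      A0 δ1 δ3 γ3 v / 2 + C0 δ1 δ3 γ3 v = β0 * sin (v - γ3) ^ 2 + β1) ∧
    (∀ γ3 : ℝ,
      (δ2 ^ 3 / (2 * π)) *
          ∫ v in (0:ℝ)..(2 * π), (1 + e * cos v) * (β0 * sin (v - γ3) ^ 2 + β1)
        = δ2 ^ 3 * (β0 / 2 + β1)) := by
  intro β0 β1
  refine ⟨fun γ3 v => ?_, fun γ3 => ?_⟩
  · simp only [A0, C0, β0, β1]
    field_simp
    ring
  · have h_integral := integral_one_add_mul_cos_mul_sin_sub_sq_add_const e β0 β1 γ3 0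
    rw [zero_add] at h_integral
    rw [h_integral, ← mul_assoc, div_mul_cancel₀ _ two_pi_pos.ne']

/-- **Average over the outer mean anomaly.** -/
theorem H023_average_outer_anomaly
    (δ1 δ2 δ3 : ℝ) (h1 : δ1 ∈ Set.Ioo (0:ℝ) 1) (h2 : δ2 ∈ Set.Ioo (0:ℝ) 1) :
    let β0 : ℝ := (1 / 2) * (9 * δ1 ^ 2 - 9 * δ3 ^ 2 + 15 * δ3 ^ 2 / δ1 ^ 2 - 15)
    let β1 : ℝ := (1 / 2) * (5 - 3 * δ1 ^ 2)
    (∀ γ3 v : ℝ,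
      A0 δ1 δ3 γ3 v / 2 + C0 δ1 δ3 γ3 v = β0 * Real.sin (v - γ3) ^ 2 + β1) ∧
    (∀ γ3 : ℝ,
      (δ2 ^ 3 / (2 * π)) *
          ∫ v in (0:ℝ)..(2 * π),
            (1 + Real.sqrt (1 - δ2 ^ 2) * Real.cos v) * (β0 * Real.sin (v - γ3) ^ 2 + β1)
        = δ2 ^ 3 * (β0 / 2 + β1)) :=
  H023_average_outer_anomaly_general δ1 δ2 δ3 (√(1 - δ2 ^ 2)) h1.1.ne'
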